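/- Fix ι ∈ {identity, complex conjugation} on ℂ and ε ∈ {1,−1}. Let (V,B) be an H-module with an H-invariant nondegenerate (ι,ε)-symmetric form B. Suppose V is bi-isotypical: there is an irreducible H-module π, not isomorphic to π^{ι,*}, such that every irreducible invariant subspace of V is isomorphic to π or to π^{ι,*}. Let Z = I_π be the sum of all invariant subspaces of V isomorphic to π. Then (V,B) is H-equivariantly isometric to Z × Z^{ι,*} equipped with the tautological (ι,ε)-symmetric form. -/

import Mathlib

variable {H V P : Type*}

/-- `U` is invariant under the representation `ρ`. -/
def Invt [Group H] [AddCommGroup V] [Module ℂ V] (ρ : Representation ℂ H V)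
    (U : Submodule ℂ V) : Prop :=
  ∀ (h : H) (v : V), v ∈ U → ρ h v ∈ U

/-- `V` is a semisimple `H`-module. -/
def Semisimple [Group H] [AddCommGroup V] [Module ℂ V] (ρ : Representation ℂ H V) : Prop :=
  ∀ U : Submodule ℂ V, Invt ρ U → ∃ U', Invt ρ U' ∧ IsCompl U U'

/-- `U` is an irreducible invariant subspace. -/
def IrredSub [Group H] [AddCommGroup V] [Module ℂ V] (ρ : Representation ℂ H V)
    (U : Submodule ℂ V) : Prop :=
  Invt ρ U ∧ U ≠ ⊥ ∧ ∀ U' ≤ U, Invt ρ U' → U' = ⊥ ∨ U' = U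

/-- The invariant subspace `U ⊆ V` is isomorphic, as an `H`-module, to the external
`H`-module `P`. -/
def RepIsoExt [Group H] [AddCommGroup V] [Module ℂ V] [AddCommGroup P] [Module ℂ P]
    (ρ : Representation ℂ H V) (ρP : Representation ℂ H P) (U : Submodule ℂ V) : Prop :=
  ∃ e : U ≃ₗ[ℂ] P, ∀ (h : H) (v : V) (hv : v ∈ U) (hv' : ρ h v ∈ U),
    e ⟨ρ h v, hv'⟩ = ρP h (e ⟨v, hv⟩)

/-- The invariant subspace `U ⊆ V` is isomorphic, as an `H`-module, to the
`σ`-twisted (conjugate-)dual of the external `H`-module `P`, with contragredient action. -/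
def RepDualIsoExt [Group H] [AddCommGroup V] [Module ℂ V] [AddCommGroup P] [Module ℂ P]
    (σ : ℂ →+* ℂ) (ρ : Representation ℂ H V) (ρP : Representation ℂ H P)
    (U : Submodule ℂ V) : Prop :=
  ∃ e : U ≃ₗ[ℂ] (P →ₛₗ[σ] ℂ), ∀ (h : H) (v : V) (hv : v ∈ U) (hv' : ρ h v ∈ U) (w : P),
    e ⟨ρ h v, hv'⟩ w = e ⟨v, hv⟩ (ρP h⁻¹ w)

/-- A sesquilinear pairing with trivial kernels, finite-dimensional on one side, is perfect. -/
theorem bijective_of_separating {X Y : Type*} [AddCommGroup X] [Module ℂ X]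
    [FiniteDimensional ℂ X] [AddCommGroup Y] [Module ℂ Y] {σ : ℂ →+* ℂ}
    (hσ : ∀ z, σ (σ z) = z) (A : Y →ₗ[ℂ] (X →ₛₗ[σ] ℂ))
    (hl : ∀ x, (∀ y, A y x = 0) → x = 0) (hr : ∀ y, (∀ x, A y x = 0) → y = 0) :
    Function.Bijective A := by
  constructor
  · rw [injective_iff_map_eq_zero]
    intro y hy
    exact hr y fun x => by simp [hy]
  · intro f
    let W : Submodule ℂ (Module.Dual ℂ X) :=
      { carrier := {g | ∃ y, ∀ x, g x = σ (A y x)}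
        add_mem' := by
          rintro g g' ⟨y, hy⟩ ⟨y', hy'⟩
          exact ⟨y + y', fun x => by simp [hy, hy']⟩
        zero_mem' := ⟨0, fun x => by simp⟩
        smul_mem' := by
          rintro c g ⟨y, hy⟩
          exact ⟨σ c • y, fun x => by simp [hy, hσ]⟩ }
    have hco : W.dualCoannihilator = ⊥ := by
      rw [eq_bot_iff]
      intro x hx
      rw [Submodule.mem_dualCoannihilator] at hx
      refine hl x fun y => ?_
      let g : Module.Dual ℂ X :=
        { toFun := fun x => σ (A y x)
          map_add' := fun a b => by simp
          map_smul' := fun c a => by simp [hσ] }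
      have hg : σ (A y x) = 0 := hx g ⟨y, fun _ => rfl⟩
      rw [← hσ (A y x), hg, map_zero]
    have hW : W = ⊤ := by
      rw [← Subspace.dualCoannihilator_dualAnnihilator_eq (W := W), hco,
        Submodule.dualAnnihilator_bot]
    let g : Module.Dual ℂ X :=
      { toFun := fun x => σ (f x)
        map_add' := fun a b => by simp
        map_smul' := fun c a => by simp [hσ] }
    obtain ⟨y, hy⟩ : g ∈ W := hW ▸ Submodule.mem_top
    refine ⟨y, LinearMap.ext fun x => ?_⟩
    rw [← hσ (A y x), ← hy x]
    exact hσ (f x)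

theorem invt_sSup [Group H] [AddCommGroup V] [Module ℂ V] {ρ : Representation ℂ H V}
    {S : Set (Submodule ℂ V)} (hS : ∀ U ∈ S, Invt ρ U) : Invt ρ (sSup S) := by
  intro h v hv
  have hle : sSup S ≤ (sSup S).comap (ρ h) :=
    sSup_le fun U hU u hu => (le_sSup hU : U ≤ _) (hS U hU h u hu)
  exact hle hv

theorem Invt.sup [Group H] [AddCommGroup V] [Module ℂ V] {ρ : Representation ℂ H V}
    {U U' : Submodule ℂ V} (hU : Invt ρ U) (hU' : Invt ρ U') : Invt ρ (U ⊔ U') := by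
  rw [← sSup_pair]
  apply invt_sSup
  rintro W (rfl | rfl) <;> assumption

/-- A nonzero invariant subspace contains an irreducible one. -/
theorem Invt.exists_irredSub_le [Group H] [AddCommGroup V] [Module ℂ V] [FiniteDimensional ℂ V]
    {ρ : Representation ℂ H V} {W : Submodule ℂ V} (hW : Invt ρ W) (hne : W ≠ ⊥) :
    ∃ U ≤ W, IrredSub ρ U := by
  obtain ⟨U, ⟨hU, hU0, hUW⟩, hmin⟩ := wellFounded_lt.has_min
    {U : Submodule ℂ V | Invt ρ U ∧ U ≠ ⊥ ∧ U ≤ W} ⟨W, hW, hne, le_rfl⟩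
  refine ⟨U, hUW, hU, hU0, fun U' hle hU' => ?_⟩
  by_contra! hcon
  exact hmin U' ⟨hU', hcon.1, hle.trans hUW⟩ (lt_of_le_of_ne hle hcon.2)

/-- The right orthogonal of `U` with respect to a form written as `v ↦ B(·, v)`. -/
def rightOrthogonal [AddCommGroup V] [Module ℂ V] {σ : ℂ →+* ℂ}
    (A : V →ₗ[ℂ] (V →ₛₗ[σ] ℂ)) (U : Submodule ℂ V) : Submodule ℂ V where
  carrier := {v | ∀ w ∈ U, A v w = 0}
  add_mem' := fun ha hb w hw => by simp [ha w hw, hb w hw]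
  zero_mem' := fun w _ => by simp
  smul_mem' := fun c v hv w hw => by simp [hv w hw]

section Orthogonal

variable [Group H] [AddCommGroup V] [Module ℂ V] {σ : ℂ →+* ℂ} {A : V →ₗ[ℂ] (V →ₛₗ[σ] ℂ)}
  {ρ : Representation ℂ H V}

theorem map_inv_apply (hA : ∀ h v w, A (ρ h v) (ρ h w) = A v w) (h : H) (v w : V) :
    A (ρ h v) w = A v (ρ h⁻¹ w) := by
  rw [← hA h v (ρ h⁻¹ w), Representation.self_inv_apply]

theorem Invt.invt_rightOrthogonal (hA : ∀ h v w, A (ρ h v) (ρ h w) = A v w)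
    {U : Submodule ℂ V} (hU : Invt ρ U) : Invt ρ (rightOrthogonal A U) := fun h v hv w hw => by
  rw [map_inv_apply hA]
  exact hv _ (hU _ _ hw)

/-- A span of pairwise orthogonal subspaces is isotropic. -/
theorem apply_eq_zero_of_mem_sSup (hsymm : ∀ v w, A v w = 0 → A w v = 0)
    {S : Set (Submodule ℂ V)} (hS : ∀ U ∈ S, ∀ U' ∈ S, ∀ u ∈ U, ∀ u' ∈ U', A u u' = 0)
    {v w : V} (hv : v ∈ sSup S) (hw : w ∈ sSup S) : A v w = 0 := by
  have hle : sSup S ≤ rightOrthogonal A (sSup S) := by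
    refine sSup_le fun U hU u hu w hw => hsymm _ _ ?_
    have hle' : sSup S ≤ rightOrthogonal A U :=
      sSup_le fun U' hU' u' hu' u hu => hS U' hU' U hU u' hu' u hu
    exact hle' hw u hu
  exact hle hv w hw

/-- The restriction of a form to `U' × U`. -/
def restrictForm (A : V →ₗ[ℂ] (V →ₛₗ[σ] ℂ)) (U U' : Submodule ℂ V) :
    U' →ₗ[ℂ] (U →ₛₗ[σ] ℂ) :=
  LinearMap.mk₂'ₛₗ (RingHom.id ℂ) σ (fun y x => A y x) (by simp) (by simp) (by simp) (by simp)

@[simp]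
theorem restrictForm_apply (U U' : Submodule ℂ V) (y : U') (x : U) :
    restrictForm A U U' y x = A y x := rfl

/-- Two irreducible subspaces are orthogonal or perfectly paired. -/
theorem IrredSub.restrictForm_bijective [FiniteDimensional ℂ V] (hσ : ∀ z, σ (σ z) = z)
    (hA : ∀ h v w, A (ρ h v) (ρ h w) = A v w) (hsymm : ∀ v w, A v w = 0 → A w v = 0)
    {U U' : Submodule ℂ V} (hU : IrredSub ρ U) (hU' : IrredSub ρ U')
    {u u' : V} (hu : u ∈ U) (hu' : u' ∈ U') (hne : A u' u ≠ 0) :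
    Function.Bijective (restrictForm A U U') := by
  have key : ∀ W W' : Submodule ℂ V, IrredSub ρ W → IrredSub ρ W' → ∀ w ∈ W, ∀ w' ∈ W',
      A w w' ≠ 0 → W ⊓ rightOrthogonal A W' = ⊥ := by
    intro W W' hW hW' w hw w' hw' hne
    refine (hW.2.2 _ inf_le_left fun h v hv =>
      ⟨hW.1 h v hv.1, hW'.1.invt_rightOrthogonal hA h v hv.2⟩).resolve_right fun heq => ?_
    exact hne (inf_eq_left.1 heq hw w' hw')
  apply bijective_of_separating hσ
  · intro x hx
    have : (x : V) ∈ U ⊓ rightOrthogonal A U' :=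
      ⟨x.2, fun w hw => hsymm _ _ (hx ⟨w, hw⟩)⟩
    rw [key U U' hU hU' u hu u' hu' (fun h => hne (hsymm _ _ h))] at this
    simpa using this
  · intro y hy
    have : (y : V) ∈ U' ⊓ rightOrthogonal A U := ⟨y.2, fun w hw => hy ⟨w, hw⟩⟩
    rw [key U' U hU' hU u' hu' u hu hne] at this
    simpa using this

variable [AddCommGroup P] [Module ℂ P] [FiniteDimensional ℂ P] {ρP : Representation ℂ H P}

/-- If an irreducible `π` is not isomorphic to its (conjugate-)dual, then subspaces isomorphic
to `π` are orthogonal. -/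
theorem RepIsoExt.apply_eq_zero (hσ : ∀ z, σ (σ z) = z)
    (hA : ∀ h v w, A (ρ h v) (ρ h w) = A v w)
    (hPirr : ∀ U : Submodule ℂ P, (∀ (h : H) (v : P), v ∈ U → ρP h v ∈ U) → U = ⊥ ∨ U = ⊤)
    (hnsd : ¬ ∃ e : P ≃ₗ[ℂ] (P →ₛₗ[σ] ℂ), ∀ (h : H) (v w : P),
      e (ρP h v) w = e v (ρP h⁻¹ w))
    {U U' : Submodule ℂ V} (hU : Invt ρ U) (hU' : Invt ρ U') (hUP : RepIsoExt ρ ρP U)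
    (hUP' : RepIsoExt ρ ρP U') {u u' : V} (hu : u ∈ U) (hu' : u' ∈ U') : A u' u = 0 := by
  obtain ⟨e, he⟩ := hUP
  obtain ⟨e', he'⟩ := hUP'
  by_contra hne
  have hs : ∀ h p, ((e.symm (ρP h p) : U) : V) = ρ h (e.symm p) := fun h p => by
    have := he h (e.symm p) (e.symm p).2 (hU _ _ (e.symm p).2)
    simp only [Subtype.coe_eta, LinearEquiv.apply_symm_apply] at this
    rw [← this, LinearEquiv.symm_apply_apply]
  have hs' : ∀ h p, ((e'.symm (ρP h p) : U') : V) = ρ h (e'.symm p) := fun h p => by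
    have := he' h (e'.symm p) (e'.symm p).2 (hU' _ _ (e'.symm p).2)
    simp only [Subtype.coe_eta, LinearEquiv.apply_symm_apply] at this
    rw [← this, LinearEquiv.symm_apply_apply]
  let T : P →ₗ[ℂ] (P →ₛₗ[σ] ℂ) := LinearMap.mk₂'ₛₗ (RingHom.id ℂ) σ
    (fun p q => A (e'.symm p) (e.symm q)) (by simp) (by simp) (by simp) (by simp)
  have hT : ∀ p q, T p q = A (e'.symm p) (e.symm q) := fun _ _ => rfl
  have hTinv : ∀ h p q, T (ρP h p) q = T p (ρP h⁻¹ q) := fun h p q => by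
    rw [hT, hT, hs', hs, map_inv_apply hA]
  have hTinv' : ∀ h p q, T p (ρP h q) = T (ρP h⁻¹ p) q := fun h p q => by
    rw [hTinv, inv_inv]
  have hTne : T (e' ⟨u', hu'⟩) (e ⟨u, hu⟩) ≠ 0 := by simpa [hT] using hne
  let L : Submodule ℂ P :=
    { carrier := {q | ∀ p, T p q = 0}
      add_mem' := fun ha hb p => by simp [ha p, hb p]
      zero_mem' := fun p => by simp
      smul_mem' := fun c q hq p => by simp [hq p] }
  let R : Submodule ℂ P :=
    { carrier := {p | ∀ q, T p q = 0}
      add_mem' := fun ha hb p => by simp [ha p, hb p]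
      zero_mem' := fun p => by simp
      smul_mem' := fun c q hq p => by simp [hq p] }
  have hL : L = ⊥ := by
    refine (hPirr L fun h q hq p => ?_).resolve_right fun htop => ?_
    · rw [hTinv']
      exact hq _
    · exact hTne ((htop ▸ Submodule.mem_top : e ⟨u, hu⟩ ∈ L) _)
  have hR : R = ⊥ := by
    refine (hPirr R fun h q hq p => ?_).resolve_right fun htop => ?_
    · rw [hTinv]
      exact hq _
    · exact hTne ((htop ▸ Submodule.mem_top : e' ⟨u', hu'⟩ ∈ R) _)
  have hbij : Function.Bijective T := bijective_of_separating hσ T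
    (fun x hx => (Submodule.mem_bot ℂ).1 (hL ▸ (show x ∈ L from hx)))
    (fun x hx => (Submodule.mem_bot ℂ).1 (hR ▸ (show x ∈ R from hx)))
  exact hnsd ⟨LinearEquiv.ofBijective T hbij, hTinv⟩

/-- If `π` is not isomorphic to its (conjugate-)dual, then irreducible subspaces isomorphic
to the (conjugate-)dual of `π` are orthogonal. -/
theorem RepDualIsoExt.apply_eq_zero [FiniteDimensional ℂ V] (hσ : ∀ z, σ (σ z) = z)
    (hA : ∀ h v w, A (ρ h v) (ρ h w) = A v w) (hsymm : ∀ v w, A v w = 0 → A w v = 0)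
    (hnsd : ¬ ∃ e : P ≃ₗ[ℂ] (P →ₛₗ[σ] ℂ), ∀ (h : H) (v w : P),
      e (ρP h v) w = e v (ρP h⁻¹ w))
    {U U' : Submodule ℂ V} (hU : IrredSub ρ U) (hU' : IrredSub ρ U')
    (hUP : RepDualIsoExt σ ρ ρP U) (hUP' : RepDualIsoExt σ ρ ρP U')
    {u u' : V} (hu : u ∈ U) (hu' : u' ∈ U') : A u' u = 0 := by
  obtain ⟨e, he⟩ := hUP
  obtain ⟨e', he'⟩ := hUP'
  by_contra hne
  let b : U' ≃ₗ[ℂ] (U →ₛₗ[σ] ℂ) := LinearEquiv.ofBijective (restrictForm A U U')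
    (hU.restrictForm_bijective hσ hA hsymm hU' hu hu' hne)
  have hb : ∀ y x, b y x = A y x := fun _ _ => rfl
  let D : P →ₗ[ℂ] (U →ₛₗ[σ] ℂ) := LinearMap.mk₂'ₛₗ (RingHom.id ℂ) σ
    (fun p x => σ (e x p)) (by simp) (by simp [hσ]) (by simp) (by simp)
  have hD : ∀ p x, D p x = σ (e x p) := fun _ _ => rfl
  have hσ0 : ∀ z, σ z = 0 → z = 0 := fun z hz => by rw [← hσ z, hz, map_zero]
  have hDbij : Function.Bijective D := by
    refine bijective_of_separating hσ D (fun x hx => ?_) (fun p hp => ?_)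
    · rw [← e.map_eq_zero_iff]
      exact LinearMap.ext fun p => hσ0 _ (hx p)
    · rw [← Module.forall_dual_apply_eq_zero_iff ℂ]
      intro f
      let g : P →ₛₗ[σ] ℂ :=
        { toFun := fun x => σ (f x)
          map_add' := fun a b => by simp
          map_smul' := fun c a => by simp }
      have := hσ0 _ (hp (e.symm g))
      rw [LinearEquiv.apply_symm_apply] at this
      exact hσ0 _ this
  refine hnsd ⟨(LinearEquiv.ofBijective D hDbij).trans (b.symm.trans e'), fun h p w => ?_⟩
  have hy : b.symm (D (ρP h p)) = ⟨ρ h (b.symm (D p)), hU'.1 _ _ (b.symm (D p)).2⟩ := by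
    rw [LinearEquiv.symm_apply_eq]
    ext x
    have h1 := he h⁻¹ x x.2 (hU.1 _ _ x.2) p
    rw [inv_inv] at h1
    have h2 : b (b.symm (D p)) ⟨ρ h⁻¹ x, hU.1 _ _ x.2⟩ = D p ⟨ρ h⁻¹ x, hU.1 _ _ x.2⟩ := by
      rw [LinearEquiv.apply_symm_apply]
    rw [hb, map_inv_apply hA, ← hb _ ⟨ρ h⁻¹ x, hU.1 _ _ x.2⟩, h2, hD, hD, h1]
  change e' (b.symm (D (ρP h p))) w = e' (b.symm (D p)) (ρP h⁻¹ w)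
  rw [hy]
  exact he' h _ (b.symm (D p)).2 _ w

end Orthogonal

/-- If `(V,B)` is a nondegenerate `(ι,ε)`-symmetric `H`-module which is
bi-isotypical of type `{π, π^{ι,*}}` with `π` not isomorphic to `π^{ι,*}`, then `(V,B)` is
`H`-equivariantly isometric to `Z × Z^{ι,*}` with the tautological form, where `Z = I_π`. -/
theorem stmt_6 [Group H] [AddCommGroup V] [Module ℂ V] [FiniteDimensional ℂ V]
    [AddCommGroup P] [Module ℂ P] [FiniteDimensional ℂ P]
    (σ : ℂ →+* ℂ) (hσ : σ = RingHom.id ℂ ∨ σ = starRingEnd ℂ)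
    (ε : ℂ) (hε : ε = 1 ∨ ε = -1)
    (ρ : Representation ℂ H V) (hss : Semisimple ρ)
    (ρP : Representation ℂ H P)
    (hPss : ∀ U : Submodule ℂ P, (∀ (h : H) (v : P), v ∈ U → ρP h v ∈ U) →
      ∃ U', (∀ (h : H) (v : P), v ∈ U' → ρP h v ∈ U') ∧ IsCompl U U')
    (hPirr : ∀ U : Submodule ℂ P, (∀ (h : H) (v : P), v ∈ U → ρP h v ∈ U) →
      U = ⊥ ∨ U = ⊤)
    -- π is not isomorphic to π^{ι,*}
    (hnsd : ¬ ∃ e : P ≃ₗ[ℂ] (P →ₛₗ[σ] ℂ), ∀ (h : H) (v w : P),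
      e (ρP h v) w = e v (ρP h⁻¹ w))
    -- every irreducible invariant subspace of V is isomorphic to π or to π^{ι,*}
    (hbi : ∀ U : Submodule ℂ V, IrredSub ρ U →
      RepIsoExt ρ ρP U ∨ RepDualIsoExt σ ρ ρP U)
    (B : V → V → ℂ)
    (hB1 : ∀ v v' w, B (v + v') w = B v w + B v' w)
    (hB2 : ∀ v w w', B v (w + w') = B v w + B v w')
    (hB3 : ∀ (a : ℂ) (v w : V), B (a • v) w = σ a * B v w)
    (hB4 : ∀ (a : ℂ) (v w : V), B v (a • w) = a * B v w)
    (hBinv : ∀ (h : H) (v w : V), B (ρ h v) (ρ h w) = B v w)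
    (hBsym : ∀ v w, B w v = ε * σ (B v w))
    (hBnd : ∀ v, (∀ w, B v w = 0) → v = 0) :
    -- Z = I_π, the sum of all invariant subspaces of V isomorphic to π
    let Z : Submodule ℂ V := sSup {U | Invt ρ U ∧ RepIsoExt ρ ρP U}
    ∃ Φ : V ≃ₗ[ℂ] Z × (Z →ₛₗ[σ] ℂ),
      -- Φ is H-equivariant (contragredient action on the dual factor)
      (∀ (h : H) (v : V), ((Φ (ρ h v)).1 : V) = ρ h ((Φ v).1 : V)) ∧
      (∀ (h : H) (v : V) (w : V) (hw : w ∈ Z) (hw' : ρ h⁻¹ w ∈ Z),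
        (Φ (ρ h v)).2 ⟨w, hw⟩ = (Φ v).2 ⟨ρ h⁻¹ w, hw'⟩) ∧
      -- Φ carries B to the tautological (ι,ε)-symmetric form
      (∀ v v' : V, ε * σ ((Φ v).2 (Φ v').1) + (Φ v').2 (Φ v).1 = B v v') := by
  intro Z
  have hσσ : ∀ z, σ (σ z) = z := by rcases hσ with rfl | rfl <;> simp
  let A : V →ₗ[ℂ] (V →ₛₗ[σ] ℂ) := LinearMap.mk₂'ₛₗ (RingHom.id ℂ) σ (fun v w => B w v)
    (fun v v' w => hB2 w v v') (fun c v w => hB4 c w v) (fun v w w' => hB1 w w' v)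
    (fun c v w => hB3 c w v)
  have hA : ∀ h v w, A (ρ h v) (ρ h w) = A v w := fun h v w => hBinv h w v
  have hsymm : ∀ v w, A v w = 0 → A w v = 0 := fun v w h => by
    change B v w = 0
    rw [hBsym w v, show B w v = 0 from h, map_zero, mul_zero]
  let Z' : Submodule ℂ V := sSup {U | IrredSub ρ U ∧ RepDualIsoExt σ ρ ρP U}
  have hZ : Invt ρ Z := invt_sSup fun U hU => hU.1
  have hZ' : Invt ρ Z' := invt_sSup fun U hU => hU.1.1
  have hZiso : ∀ v ∈ Z, ∀ w ∈ Z, A v w = 0 := fun v hv w hw =>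
    apply_eq_zero_of_mem_sSup hsymm (fun U hU U' hU' u hu u' hu' =>
      RepIsoExt.apply_eq_zero hσσ hA hPirr hnsd hU'.1 hU.1 hU'.2 hU.2 hu' hu) hv hw
  have hZiso' : ∀ v ∈ Z', ∀ w ∈ Z', A v w = 0 := fun v hv w hw =>
    apply_eq_zero_of_mem_sSup hsymm (fun U hU U' hU' u hu u' hu' =>
      RepDualIsoExt.apply_eq_zero hσσ hA hsymm hnsd hU'.1 hU.1 hU'.2 hU.2 hu' hu) hv hw
  have hsup : Z ⊔ Z' = ⊤ := by
    obtain ⟨W, hW, hc⟩ := hss _ (hZ.sup hZ')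
    by_cases h0 : W = ⊥
    · simpa [h0] using hc.sup_eq_top
    · obtain ⟨U, hUW, hU⟩ := hW.exists_irredSub_le h0
      have hle : U ≤ Z ⊔ Z' := by
        rcases hbi U hU with h | h
        · exact le_sup_of_le_left (le_sSup ⟨hU.1, h⟩)
        · exact le_sup_of_le_right (le_sSup ⟨hU, h⟩)
      exact absurd (le_bot_iff.1 (hc.disjoint hle hUW)) hU.2.1
  have hzero : ∀ v, (∀ w ∈ Z, A v w = 0) → (∀ w ∈ Z', A v w = 0) → v = 0 := by
    intro v h h'
    refine hBnd v fun w => hsymm _ _ ?_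
    obtain ⟨z, hz, y, hy, rfl⟩ := Submodule.mem_sup.1 (hsup ▸ Submodule.mem_top : w ∈ Z ⊔ Z')
    rw [map_add, h z hz, h' y hy, add_zero]
  have hcompl : IsCompl Z Z' := by
    refine ⟨Submodule.disjoint_def.2 fun v hv hv' => ?_, codisjoint_iff.2 hsup⟩
    exact hzero v (hZiso v hv) (hZiso' v hv')
  have hbij : Function.Bijective (restrictForm A Z Z') := by
    refine bijective_of_separating hσσ _ (fun x hx => Subtype.ext ?_) (fun y hy => Subtype.ext ?_)
    · exact hzero x (hZiso x x.2) fun w hw => hsymm _ _ (hx ⟨w, hw⟩)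
    · exact hzero y (fun w hw => hy ⟨w, hw⟩) (hZiso' y y.2)
  let Φ : V ≃ₗ[ℂ] Z × (Z →ₛₗ[σ] ℂ) := (Submodule.prodEquivOfIsCompl Z Z' hcompl).symm.trans
    ((LinearEquiv.refl ℂ Z).prodCongr (LinearEquiv.ofBijective _ hbij))
  have hΦ : ∀ (z : Z) (y : Z'), Φ (z + y) = (z, restrictForm A Z Z' y) := fun z y => by
    have : (z + y : V) = Submodule.prodEquivOfIsCompl Z Z' hcompl (z, y) := by simp
    rw [this]
    simp only [Φ, LinearEquiv.trans_apply, LinearEquiv.symm_apply_apply]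
    rfl
  have hdec : ∀ v : V, ∃ (z : Z) (y : Z'), v = z + y := fun v => by
    obtain ⟨z, hz, y, hy, rfl⟩ := Submodule.mem_sup.1 (hsup ▸ Submodule.mem_top : v ∈ Z ⊔ Z')
    exact ⟨⟨z, hz⟩, ⟨y, hy⟩, rfl⟩
  have hΦρ : ∀ (h : H) (z : Z) (y : Z'), Φ (ρ h (z + y)) =
      (⟨ρ h z, hZ h z z.2⟩, restrictForm A Z Z' ⟨ρ h y, hZ' h y y.2⟩) := fun h z y => by
    rw [← hΦ, map_add]
  refine ⟨Φ, fun h v => ?_, fun h v w hw hw' => ?_, fun v v' => ?_⟩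
  · obtain ⟨z, y, rfl⟩ := hdec v
    rw [hΦρ, hΦ]
  · obtain ⟨z, y, rfl⟩ := hdec v
    rw [hΦρ, hΦ]
    exact map_inv_apply hA h y w
  · obtain ⟨z, y, rfl⟩ := hdec v
    obtain ⟨z', y', rfl⟩ := hdec v'
    rw [hΦ, hΦ]
    change ε * σ (B z' y) + B z y' = B (z + y) (z' + y')
    have h1 : B z z' = 0 := hZiso z' z'.2 z z.2
    have h2 : B y y' = 0 := hZiso' y' y'.2 y y.2
    rw [hB1, hB2, hB2, h1, h2, ← hBsym]
    ring
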